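/- Let a, b ∈ [0,1] and 0 ≤ c ≤ min{a, b, 1−a, 1−b, |b−a|}, and set d₂ = min(a,b) − c. Then the concordance of the upper Fréchet–Hoeffding copula M with C̄^{b,a,c} satisfies Q(M, C̄^{b,a,c}) = 4·∫₀¹ C̄^{b,a,c}(u, u) du − 1 = 1 − 4(a−d₂)(b−d₂); equivalently, ∫₀¹ C̄^{b,a,c}(u,u) du = 1/2 − (a−d₂)(b−d₂). -/

import Mathlib

/-- The upper bound copula `C̄^{b,a,c}` of the asymmetry construction, where
`d₂ = min(a,b) − c`. -/
noncomputable def CUp (a b c u v : ℝ) : ℝ :=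
  min (min u v)
    (max (max (min a b - c) (u - b + (min a b - c)))
      (max (v - a + (min a b - c)) (u + v - a - b + (min a b - c))))

lemma piece_int (f : ℝ → ℝ) (p q k l : ℝ) (hpq : p ≤ q)
    (h : ∀ u, p ≤ u → u ≤ q → f u = k * u + l) :
    ∫ u in p..q, f u = k * (q ^ 2 - p ^ 2) / 2 + l * (q - p) := by
  have h1 : ∫ u in p..q, f u = ∫ u in p..q, (k * u + l) := by
    apply intervalIntegral.integral_congr
    intro u hu
    rw [Set.uIcc_of_le hpq] at hu
    exact h u hu.1 hu.2
  rw [h1, intervalIntegral.integral_add (by apply Continuous.intervalIntegrable; fun_prop)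
    (by apply Continuous.intervalIntegrable; fun_prop),
    intervalIntegral.integral_const_mul, integral_id, intervalIntegral.integral_const]
  simp only [smul_eq_mul]
  ring

lemma diag_int (f : ℝ → ℝ) (m n c : ℝ) (hf : Continuous f) (hc0 : 0 ≤ c) (hcm : c ≤ m)
    (hmn : m ≤ n) (hn : c ≤ 1 - n)
    (h1 : ∀ u, u ≤ m - c → f u = u)
    (h2 : ∀ u, m - c ≤ u → u ≤ m → f u = m - c)
    (h3 : ∀ u, m ≤ u → u ≤ n → f u = u - c)
    (h4 : ∀ u, n ≤ u → u ≤ n + c → f u = 2 * u - n - c)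
    (h5 : ∀ u, n + c ≤ u → f u = u) :
    ∫ u in (0:ℝ)..1, f u = 1 / 2 - c * (n - m + c) := by
  have hi : ∀ p q : ℝ, IntervalIntegrable f MeasureTheory.volume p q :=
    fun p q => hf.intervalIntegrable p q
  rw [← intervalIntegral.integral_add_adjacent_intervals (hi 0 (m - c)) (hi _ 1),
    ← intervalIntegral.integral_add_adjacent_intervals (hi (m - c) m) (hi _ 1),
    ← intervalIntegral.integral_add_adjacent_intervals (hi m n) (hi _ 1),
    ← intervalIntegral.integral_add_adjacent_intervals (hi n (n + c)) (hi _ 1),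
    piece_int f 0 (m - c) 1 0 (by linarith) (fun u _ hu => by rw [h1 u hu]; ring),
    piece_int f (m - c) m 0 (m - c) (by linarith) (fun u hu hu' => by rw [h2 u hu hu']; ring),
    piece_int f m n 1 (-c) hmn (fun u hu hu' => by rw [h3 u hu hu']; ring),
    piece_int f n (n + c) 2 (-n - c) (by linarith) (fun u hu hu' => by rw [h4 u hu hu']; ring),
    piece_int f (n + c) 1 1 0 (by linarith) (fun u hu _ => by rw [h5 u hu]; ring)]
  ring

lemma CUp_diag_swap (a b c u : ℝ) : CUp a b c u u = CUp b a c u u := by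
  unfold CUp
  rw [min_comm b a]
  grind

lemma CUp_int (a b c : ℝ) (hc0 : 0 ≤ c) (hcm : c ≤ a)
    (hmn : a ≤ b) (hn : c ≤ 1 - b) (hab : c ≤ b - a) :
    ∫ u in (0:ℝ)..1, CUp a b c u u = 1 / 2 - c * (b - a + c) := by
  have hm : min a b = a := min_eq_left hmn
  apply diag_int _ a b c _ hc0 hcm hmn hn
  · intro u hu
    simp only [CUp, hm]; grind
  · intro u hu hu'
    simp only [CUp, hm]; grind
  · intro u hu hu'
    simp only [CUp, hm]; grind
  · intro u hu hu'
    simp only [CUp, hm]; grind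
  · intro u hu
    simp only [CUp, hm]; grind
  · unfold CUp; fun_prop

/-- `Q(M, C̄^{b,a,c}) = 1 − 4(a−d₂)(b−d₂)`, where `M` is the upper Fréchet–Hoeffding
copula whose mass lies on the diagonal; equivalently
`∫₀¹ C̄^{b,a,c}(u,u) du = 1/2 − (a−d₂)(b−d₂)`. -/
theorem Q_M_CUp (a b c : ℝ) (ha : a ∈ Set.Icc (0:ℝ) 1) (hb : b ∈ Set.Icc (0:ℝ) 1)
    (hc0 : 0 ≤ c)
    (hc : c ≤ min (min a b) (min (min (1 - a) (1 - b)) |b - a|))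
    (d₂ : ℝ) (hd : d₂ = min a b - c) :
    4 * (∫ u in (0:ℝ)..1, CUp a b c u u) - 1 = 1 - 4 * (a - d₂) * (b - d₂) ∧
    (∫ u in (0:ℝ)..1, CUp a b c u u) = 1 / 2 - (a - d₂) * (b - d₂) := by
  have key : (∫ u in (0:ℝ)..1, CUp a b c u u) = 1 / 2 - (a - d₂) * (b - d₂) := by
    simp only [le_min_iff] at hc
    obtain ⟨⟨h1, h2⟩, ⟨h3, h4⟩, h5⟩ := hc
    rcases le_total a b with h | h
    · rw [abs_of_nonneg (by linarith)] at h5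
      rw [CUp_int a b c hc0 h1 h h4 h5, hd, min_eq_left h]
      ring
    · rw [abs_of_nonpos (by linarith)] at h5
      simp only [CUp_diag_swap a b c]
      rw [CUp_int b a c hc0 h2 h h3 (by linarith), hd, min_eq_right h]
      ring
  refine ⟨?_, key⟩
  rw [key]
  ring
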